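/- (Hölder's theorem) The Euler Gamma function is differentially transcendental over ℂ(x): for every n ∈ ℕ and every polynomial P in n + 2 variables with complex coefficients, if P(x, Γ(x), Γ'(x), …, Γ⁽ⁿ⁾(x)) = 0 for all x ∈ ℂ with Re(x) > 0 (where Γ⁽ⁱ⁾ denotes the i-th complex derivative of the complex Gamma function, which is analytic on the right half-plane), then P = 0. -/

import Mathlib

set_option synthInstance.maxHeartbeats 400000
set_option maxHeartbeats 1000000

/-!
Differentiating `Γ (x + 1) = x * Γ x` shows that the derivatives of `Γ` at `x + 1` are
`x * Γ⁽ⁱ⁾ x + i * Γ⁽ⁱ⁻¹⁾ x`. Hence the ideal of relations `P (x, Y₀, Y₁, …)` of `Γ` is stable under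
the substitution `σ : x ↦ x + 1`, `Yᵢ ↦ x Yᵢ + i Yᵢ₋₁`, which preserves leading monomials for the
lexicographic order in which `Yᵢ` outweighs `Yⱼ` whenever `j < i`. If the ideal is nonzero, it
contains a relation `P` of least degree dividing all other relations of that degree, so
`σ P = q P` with `q ∈ ℂ[x]`, and comparing leading coefficients shows that the degree of `q` is the
total degree of the leading monomial of `P`. This is positive, so `q` has a root `c`. If `c ≠ 0`,
the substitution is invertible at `x = c` and `x - (c + 1)` divides `P`. If `c = 0`, then `P`
vanishes on `Y₀ = 0` for `x = 1`, hence for `x = 2, 3, …`, and `Y₀` divides `P`. Neither factor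
vanishes identically along `Γ`, so the cofactor is again a relation, against the choice of `P`.
Only the values of `Γ` and its derivatives at large natural numbers enter.
-/

namespace GammaTranscendence

open Filter MvPolynomial
open scoped Polynomial MonomialOrder

section LeadingCoeffIdeal

variable {σ R : Type*} [CommRing R] (m : MonomialOrder σ)

/-- The ideal of coefficients at the exponent `a` of those elements of `I` whose degree is at most
`a`: the leading coefficients of the elements of `I` of degree `a`, together with `0`. -/
def leadingCoeffIdeal (I : Ideal (MvPolynomial σ R)) (a : σ →₀ ℕ) : Ideal R where
  carrier := {c | ∃ P ∈ I, m.degree P ≼[m] a ∧ coeff a P = c}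
  zero_mem' := ⟨0, I.zero_mem, by simp, coeff_zero a⟩
  add_mem' := by
    rintro _ _ ⟨P, hP, hPa, rfl⟩ ⟨Q, hQ, hQa, rfl⟩
    exact ⟨P + Q, I.add_mem hP hQ, m.degree_add_le.trans (sup_le hPa hQa), coeff_add a P Q⟩
  smul_mem' := by
    rintro c _ ⟨P, hP, hPa, rfl⟩
    exact ⟨c • P, I.smul_of_tower_mem c hP, m.degree_smul_le.trans hPa, coeff_smul a c P⟩

theorem exists_mem_forall_degree_lt_eq_zero {I : Ideal (MvPolynomial σ R)} (hI : I ≠ ⊥) :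
    ∃ P ∈ I, P ≠ 0 ∧ ∀ Q ∈ I, m.degree Q ≺[m] m.degree P → Q = 0 := by
  obtain ⟨P₀, hP₀, hP₀_ne⟩ := Submodule.exists_mem_ne_zero_of_ne_bot hI
  obtain ⟨P, ⟨hP, hP_ne⟩, hmin⟩ := (InvImage.wf (fun Q => m.toSyn (m.degree Q))
    wellFounded_lt).has_min {Q | Q ∈ I ∧ Q ≠ 0} ⟨P₀, hP₀, hP₀_ne⟩
  exact ⟨P, hP, hP_ne, fun Q hQ hlt => by_contra fun hQ_ne => hmin Q ⟨hQ, hQ_ne⟩ hlt⟩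

theorem exists_mem_forall_degree_le_eq_C_mul [IsPrincipalIdealRing R] {I : Ideal (MvPolynomial σ R)}
    (hI : I ≠ ⊥) :
    ∃ P ∈ I, P ≠ 0 ∧ ∀ Q ∈ I, m.degree Q ≼[m] m.degree P → ∃ c, Q = C c * P := by
  obtain ⟨P₀, hP₀, hP₀_ne, hmin⟩ := exists_mem_forall_degree_lt_eq_zero m hI
  set a := m.degree P₀
  obtain ⟨p, hp⟩ := IsPrincipalIdealRing.principal (leadingCoeffIdeal m I a)
  have hp_dvd {Q} (hQ : Q ∈ I) (hQa : m.degree Q ≼[m] a) : p ∣ coeff a Q :=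
    Ideal.mem_span_singleton.1 (hp.le ⟨Q, hQ, hQa, rfl⟩)
  obtain ⟨P, hP, hPa, hPp⟩ : p ∈ leadingCoeffIdeal m I a := hp.ge (Ideal.mem_span_singleton_self p)
  have hp_ne : p ≠ 0 := by
    rintro rfl
    exact m.coeff_degree_ne_zero_iff.2 hP₀_ne (zero_dvd_iff.1 (hp_dvd hP₀ le_rfl))
  have haP : a ≼[m] m.degree P := m.le_degree (mem_support_iff.2 (hPp ▸ hp_ne))
  refine ⟨P, hP, by rintro rfl; exact hp_ne (by simpa using hPp.symm), fun Q hQ hQP => ?_⟩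
  have hQa := hQP.trans hPa
  obtain ⟨c, hc⟩ := hp_dvd hQ hQa
  have hdiff_mem : Q - C c * P ∈ I := I.sub_mem hQ (I.mul_mem_left _ hP)
  have hdiff_le : m.degree (Q - C c * P) ≼[m] a := by
    refine m.degree_sub_le.trans (sup_le hQa ?_)
    rw [← smul_eq_C_mul]
    exact m.degree_smul_le.trans hPa
  have hdiff_coeff : coeff a (Q - C c * P) = 0 := by
    rw [coeff_sub, coeff_C_mul, hPp, hc, mul_comm, sub_self]
  refine ⟨c, sub_eq_zero.1 (by_contra fun hne => hne (hmin _ hdiff_mem (hdiff_le.lt_of_ne ?_)))⟩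
  intro heq
  rw [← m.toSyn.injective heq] at hdiff_coeff
  exact hne (m.coeff_degree_eq_zero_iff.1 hdiff_coeff)

theorem isUnit_of_forall_degree_le_eq_C_mul [IsDomain R] {I : Ideal (MvPolynomial σ R)}
    {f Q : MvPolynomial σ R} (hne : f * Q ≠ 0)
    (hgen : ∀ Q' ∈ I, m.degree Q' ≼[m] m.degree (f * Q) → ∃ c, Q' = C c * (f * Q))
    (hQ : Q ∈ I) : IsUnit f := by
  have hdeg : m.degree Q ≼[m] m.degree (f * Q) := by
    rw [m.degree_mul' hne, map_add]
    exact le_add_of_nonneg_left (m.zero_le _)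
  obtain ⟨c, hc⟩ := hgen Q hQ hdeg
  refine .of_mul_eq_one (C c) (mul_right_cancel₀ (right_ne_zero_of_mul hne) ?_)
  linear_combination -hc

end LeadingCoeffIdeal

section TriangularSubstitution

variable {σ R S : Type*} [CommRing R] [IsDomain R] [CommSemiring S] {m : MonomialOrder σ}
  {f : σ → MvPolynomial σ R}

theorem degree_prod_pow_of_degree_eq_single (hf : ∀ i, m.degree (f i) = Finsupp.single i 1)
    (a : σ →₀ ℕ) : m.degree (a.prod fun i e => f i ^ e) = a := by
  have hf_ne (i) : f i ≠ 0 := m.ne_zero_of_degree_ne_zero (by simp [hf i])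
  rw [Finsupp.prod, m.degree_prod fun i _ => pow_ne_zero _ (hf_ne i)]
  simpa [m.degree_pow, hf, Finsupp.sum] using a.sum_single

theorem coeff_prod_pow_of_degree_eq_single (hf : ∀ i, m.degree (f i) = Finsupp.single i 1)
    (a : σ →₀ ℕ) :
    coeff a (a.prod fun i e => f i ^ e) = a.prod fun i e => m.leadingCoeff (f i) ^ e := by
  have hf_ne (i) : f i ≠ 0 := m.ne_zero_of_degree_ne_zero (by simp [hf i])
  have hlead := m.leadingCoeff_prod_of_regular (P := fun i => f i ^ a i) (s := a.support)
    fun i _ => .of_ne_zero (m.leadingCoeff_ne_zero_iff.2 (pow_ne_zero _ (hf_ne i)))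
  simp only [m.leadingCoeff_pow] at hlead
  rw [← Finsupp.prod, ← Finsupp.prod] at hlead
  rw [← hlead, MonomialOrder.leadingCoeff, degree_prod_pow_of_degree_eq_single hf]

variable (φ : S →+* R)

theorem degree_eval₂_monomial_le (hf : ∀ i, m.degree (f i) = Finsupp.single i 1)
    (a : σ →₀ ℕ) (c : S) : m.degree (eval₂ (C.comp φ) f (monomial a c)) ≼[m] a := by
  rw [eval₂_monomial, RingHom.comp_apply, ← smul_eq_C_mul]
  exact m.degree_smul_le.trans_eq (congrArg _ (degree_prod_pow_of_degree_eq_single hf a))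

theorem degree_eval₂_le (hf : ∀ i, m.degree (f i) = Finsupp.single i 1) (P : MvPolynomial σ S) :
    m.degree (eval₂ (C.comp φ) f P) ≼[m] m.degree P := by
  conv_lhs => rw [P.as_sum, eval₂_sum]
  exact m.degree_sum_le.trans <| Finset.sup_le fun b hb =>
    (degree_eval₂_monomial_le φ hf b _).trans (m.le_degree hb)

theorem coeff_degree_eval₂ (hf : ∀ i, m.degree (f i) = Finsupp.single i 1)
    (P : MvPolynomial σ S) :
    coeff (m.degree P) (eval₂ (C.comp φ) f P) =
      φ (m.leadingCoeff P) * (m.degree P).prod fun i e => m.leadingCoeff (f i) ^ e := by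
  nth_rewrite 2 [P.as_sum]
  rw [eval₂_sum, coeff_sum, Finset.sum_eq_single (m.degree P)]
  · rw [eval₂_monomial, RingHom.comp_apply, coeff_C_mul, coeff_prod_pow_of_degree_eq_single hf,
      MonomialOrder.leadingCoeff]
  · intro b hb hne
    exact m.coeff_eq_zero_of_lt <| (degree_eval₂_monomial_le φ hf b _).trans_lt <|
      (m.le_degree hb).lt_of_ne (m.toSyn.injective.ne hne)
  · intro hP
    simp [notMem_support_iff.1 hP]

end TriangularSubstitution

theorem X_dvd_of_forall_eval_eq_zero {σ R : Type*} [CommRing R] [IsDomain R] [Infinite R]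
    {i : σ} {P : MvPolynomial σ R} (hP : ∀ y : σ → R, y i = 0 → eval y P = 0) : X i ∣ P := by
  classical
  rw [X_dvd_iff_modMonomial_eq_zero]
  refine MvPolynomial.funext fun y => ?_
  set r := P.modMonomial (Finsupp.single i 1)
  have hindep : eval y r = eval (Function.update y i 0) r := by
    refine eval₂Hom_congr' rfl (fun j hj _ => ?_) rfl
    obtain ⟨s, hs, hjs⟩ := (mem_vars_iff_mem_support j).1 hj
    have hji : j ≠ i := by
      rintro rfl
      refine mem_support_iff.1 hs (coeff_modMonomial_of_le _ ?_)
      simpa [Nat.one_le_iff_ne_zero] using hjs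
    exact (Function.update_of_ne hji _ _).symm
  have hdecomp := congrArg (eval (Function.update y i 0)) (divMonomial_add_modMonomial_single P i)
  rw [hP _ (Function.update_self i _ _), map_add, map_mul, eval_X, Function.update_self, zero_mul,
    zero_add] at hdecomp
  rw [hindep, hdecomp, map_zero]

section Shift

variable {K : Type*}

/-- The ring `K[x][Y₀, Y₁, …]` of differential polynomials, where `Yᵢ` stands for the `i`-th
derivative of an unknown function of `x`. The variables are indexed by `ℕᵒᵈ` because
`MonomialOrder.lex` requires `>` to be well-founded on the indices. -/
abbrev DiffPolynomial (K : Type*) [CommSemiring K] := MvPolynomial ℕᵒᵈ K[X]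

/-- The lexicographic monomial order on `Y₀, Y₁, …` in which the variable of larger index weighs
more. -/
noncomputable abbrev jetOrder : MonomialOrder ℕᵒᵈ := MonomialOrder.lex

/-- The effect on the jet `yᵢ = f⁽ⁱ⁾(x)` of passing from `x` to `x + 1` for a solution of
`f (x + 1) = x * f x`. The truncated index `i - 1` at `i = 0` is harmless, since its coefficient
is `0`. -/
def shiftJet [CommSemiring K] (x : K) (y : ℕ → K) (i : ℕ) : K := x * y i + i * y (i - 1)

@[simp]
theorem shiftJet_zero [CommSemiring K] (x : K) (y : ℕ → K) : shiftJet x y 0 = x * y 0 := by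
  simp [shiftJet]

theorem shiftJet_surjective [Field K] {x : K} (hx : x ≠ 0) : Function.Surjective (shiftJet x) := by
  intro z
  let y : ℕ → K := Nat.rec (z 0 / x) fun j yj => (z (j + 1) - (j + 1) * yj) / x
  have hy_zero : y 0 = z 0 / x := rfl
  have hy_succ (j) : y (j + 1) = (z (j + 1) - (j + 1) * y j) / x := rfl
  refine ⟨y, funext fun i => ?_⟩
  rcases i with _ | j
  · rw [shiftJet_zero, hy_zero, mul_div_cancel₀ _ hx]
  · rw [shiftJet, hy_succ, mul_div_cancel₀ _ hx, Nat.add_sub_cancel, Nat.cast_succ,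
      sub_add_cancel]

theorem exists_shiftJet_zero_eq [Field K] [CharZero K] {z : ℕ → K} (hz : z 0 = 0) :
    ∃ y, shiftJet 0 y = z := by
  refine ⟨fun i => z (i + 1) / (i + 1 : ℕ), funext fun i => ?_⟩
  rcases i with _ | j
  · rw [shiftJet_zero, zero_mul, hz]
  · rw [shiftJet, zero_mul, zero_add, Nat.add_sub_cancel,
      mul_div_cancel₀ _ (Nat.cast_ne_zero.2 j.succ_ne_zero)]

section CommSemiring

variable [CommSemiring K]

/-- Evaluation of a differential polynomial at the point `x` and the jet `y`. -/
noncomputable def evalAt (x : K) (y : ℕ → K) : DiffPolynomial K →+* K :=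
  eval₂Hom (Polynomial.evalRingHom x) fun i => y (OrderDual.ofDual i)

@[simp]
theorem evalAt_C (x : K) (y : ℕ → K) (p : K[X]) : evalAt x y (C p) = p.eval x := by
  simp [evalAt]

@[simp]
theorem evalAt_X (x : K) (y : ℕ → K) (i : ℕᵒᵈ) :
    evalAt x y (X i) = y (OrderDual.ofDual i) := by
  simp [evalAt]

theorem eval_eval_eq_evalAt (x : K) (y : ℕᵒᵈ → K[X]) (P : DiffPolynomial K) :
    (eval y P).eval x = evalAt x (fun i => (y (OrderDual.toDual i)).eval x) P := by
  change Polynomial.evalRingHom x (eval₂ (RingHom.id _) y P) = _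
  rw [hom_eval₂]
  rfl

/-- The image of the variable `Yᵢ` under `shift`, namely `x Yᵢ + i Yᵢ₋₁`. -/
noncomputable def shiftVar (i : ℕᵒᵈ) : DiffPolynomial K :=
  shiftJet (C Polynomial.X) (fun j => X (OrderDual.toDual j)) (OrderDual.ofDual i)

/-- The endomorphism `x ↦ x + 1`, `Yᵢ ↦ x Yᵢ + i Yᵢ₋₁` of the ring of differential polynomials,
which substitutes `x + 1` for `x` in relations satisfied by a solution of `f (x + 1) = x * f x`. -/
noncomputable def shift : DiffPolynomial K →+* DiffPolynomial K :=
  eval₂Hom (C.comp (Polynomial.compRingHom (Polynomial.X + 1))) shiftVar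

theorem evalAt_shift (x : K) (y : ℕ → K) (P : DiffPolynomial K) :
    evalAt x y (shift P) = evalAt (x + 1) (shiftJet x y) P := by
  have : (evalAt x y).comp shift = evalAt (x + 1) (shiftJet x y) := by
    apply MvPolynomial.ringHom_ext
    · simp [shift, Polynomial.eval_comp]
    · simp [shift, shiftVar, shiftJet]
  exact RingHom.congr_fun this P

end CommSemiring

section IsDomain

variable [CommRing K] [IsDomain K]

theorem C_X_sub_C_dvd_of_forall_evalAt_eq_zero [Infinite K] {c : K}
    {P : DiffPolynomial K} (hP : ∀ y, evalAt c y P = 0) :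
    C (Polynomial.X - Polynomial.C c) ∣ P := by
  rw [C_dvd_iff_map_hom_eq_zero (Polynomial.evalRingHom c) _
    fun p => Polynomial.dvd_iff_isRoot.symm]
  refine MvPolynomial.funext fun y => ?_
  rw [eval_map, map_zero]
  exact hP fun i => y (OrderDual.toDual i)

theorem X_zero_dvd_of_forall_evalAt_eq_zero {s : Set K} (hs : s.Infinite)
    {P : DiffPolynomial K} (hP : ∀ x ∈ s, ∀ y : ℕ → K, y 0 = 0 → evalAt x y P = 0) :
    X (OrderDual.toDual 0) ∣ P := by
  refine X_dvd_of_forall_eval_eq_zero fun y hy => ?_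
  refine Polynomial.eq_zero_of_infinite_isRoot _ (hs.mono fun x hx => ?_)
  rw [Set.mem_ofPred_eq, Polynomial.IsRoot, eval_eval_eq_evalAt]
  exact hP x hx _ (by rw [hy, Polynomial.eval_zero])

theorem degree_C_X_mul_X (i : ℕᵒᵈ) :
    jetOrder.degree (C Polynomial.X * X i : DiffPolynomial K) = Finsupp.single i 1 := by
  rw [MonomialOrder.degree_mul (C_ne_zero.2 Polynomial.X_ne_zero) (X_ne_zero i),
    MonomialOrder.degree_C, zero_add, MonomialOrder.degree_X]

theorem degree_natCast_mul_X_pred_lt (i : ℕ) :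
    jetOrder.degree ((i : DiffPolynomial K) * X (OrderDual.toDual (i - 1))) ≺[jetOrder]
      jetOrder.degree (C Polynomial.X * X (OrderDual.toDual i) : DiffPolynomial K) := by
  rw [degree_C_X_mul_X]
  rcases i with _ | j
  · rw [Nat.cast_zero, zero_mul, MonomialOrder.degree_zero, map_zero,
      MonomialOrder.toSyn_lt_iff_ne_zero]
    simp
  · rw [← map_natCast C, ← smul_eq_C_mul, Nat.add_sub_cancel]
    refine (jetOrder.degree_smul_le.trans jetOrder.degree_X_le_single).trans_lt ?_
    rw [MonomialOrder.lex_lt_iff, Finsupp.Lex.single_lt_iff, OrderDual.toDual_lt_toDual]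
    exact j.lt_succ_self

theorem degree_shiftVar (i : ℕᵒᵈ) :
    jetOrder.degree (shiftVar i : DiffPolynomial K) = Finsupp.single i 1 :=
  (jetOrder.degree_add_of_lt (degree_natCast_mul_X_pred_lt _)).trans (degree_C_X_mul_X i)

theorem leadingCoeff_shiftVar (i : ℕᵒᵈ) :
    jetOrder.leadingCoeff (shiftVar i : DiffPolynomial K) = Polynomial.X := by
  refine (jetOrder.leadingCoeff_add_of_lt (degree_natCast_mul_X_pred_lt _)).trans ?_
  rw [MonomialOrder.leadingCoeff_mul, MonomialOrder.leadingCoeff_C, MonomialOrder.leadingCoeff_X,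
    mul_one]

theorem degree_shift_le (P : DiffPolynomial K) :
    jetOrder.degree (shift P) ≼[jetOrder] jetOrder.degree P :=
  degree_eval₂_le _ degree_shiftVar P

theorem coeff_degree_shift (P : DiffPolynomial K) :
    coeff (jetOrder.degree P) (shift P) =
      (jetOrder.leadingCoeff P).comp (Polynomial.X + 1) *
        Polynomial.X ^ (jetOrder.degree P).degree := by
  refine (coeff_degree_eval₂ _ degree_shiftVar P).trans ?_
  simp only [leadingCoeff_shiftVar, Polynomial.coe_compRingHom_apply, Finsupp.prod,
    Finset.prod_pow_eq_pow_sum, Finsupp.degree_apply]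

end IsDomain

variable [Field K] {P : DiffPolynomial K} {q : K[X]}

theorem evalAt_add_one_shiftJet_of_shift_eq (hP : shift P = C q * P) (x : K) (y : ℕ → K) :
    evalAt (x + 1) (shiftJet x y) P = q.eval x * evalAt x y P := by
  rw [← evalAt_shift, hP, map_mul, evalAt_C]

theorem natDegree_eq_of_shift_eq (hP_ne : P ≠ 0) (hP : shift P = C q * P) :
    q.natDegree = (jetOrder.degree P).degree := by
  set p := jetOrder.leadingCoeff P
  have hp_ne : p ≠ 0 := jetOrder.leadingCoeff_ne_zero_iff.2 hP_ne
  have hlead : p.comp (Polynomial.X + 1) * Polynomial.X ^ (jetOrder.degree P).degree = q * p := by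
    rw [← coeff_degree_shift, hP, coeff_C_mul]
    rfl
  have hcomp_ne : p.comp (Polynomial.X + 1) ≠ 0 := by
    rwa [← Polynomial.C_1, Ne, Polynomial.comp_X_add_C_eq_zero_iff]
  have hq_ne : q ≠ 0 := by
    rintro rfl
    exact mul_ne_zero hcomp_ne (pow_ne_zero _ Polynomial.X_ne_zero) (hlead.trans (zero_mul p))
  have hcomp_deg : (p.comp (Polynomial.X + 1)).natDegree = p.natDegree := by
    rw [← Polynomial.C_1, Polynomial.natDegree_comp, Polynomial.natDegree_X_add_C, mul_one]
  have hdeg := congrArg Polynomial.natDegree hlead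
  rw [Polynomial.natDegree_mul_X_pow _ hcomp_ne, Polynomial.natDegree_mul hq_ne hp_ne,
    hcomp_deg] at hdeg
  omega

theorem C_X_sub_C_dvd_of_shift_eq [Infinite K] (hP : shift P = C q * P) {c : K} (hc : c ≠ 0)
    (hroot : q.IsRoot c) : C (Polynomial.X - Polynomial.C (c + 1)) ∣ P := by
  refine C_X_sub_C_dvd_of_forall_evalAt_eq_zero fun z => ?_
  obtain ⟨y, rfl⟩ := shiftJet_surjective hc z
  rw [evalAt_add_one_shiftJet_of_shift_eq hP, hroot.eq_zero, zero_mul]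

theorem X_zero_dvd_of_shift_eq [CharZero K] (hP : shift P = C q * P) (hroot : q.IsRoot 0) :
    X (OrderDual.toDual 0) ∣ P := by
  have hvanish (k : ℕ) : ∀ z : ℕ → K, z 0 = 0 → evalAt (k + 1 : K) z P = 0 := by
    induction k with
    | zero =>
      intro z hz
      obtain ⟨y, rfl⟩ := exists_shiftJet_zero_eq hz
      rw [Nat.cast_zero, evalAt_add_one_shiftJet_of_shift_eq hP, hroot.eq_zero, zero_mul]
    | succ k ih =>
      intro z hz
      have hk : (k + 1 : K) ≠ 0 := Nat.cast_add_one_ne_zero k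
      obtain ⟨y, rfl⟩ := shiftJet_surjective hk z
      have hy : y 0 = 0 := (mul_eq_zero.1 ((shiftJet_zero _ y).symm.trans hz)).resolve_left hk
      rw [Nat.cast_succ, evalAt_add_one_shiftJet_of_shift_eq hP, ih y hy, mul_zero]
  have hinf : (Set.range fun k : ℕ => (k + 1 : K)).Infinite :=
    Set.infinite_range_of_injective fun j k h => by simpa using h
  exact X_zero_dvd_of_forall_evalAt_eq_zero hinf (Set.forall_mem_range.2 hvanish)

theorem ideal_eq_bot_of_shift_mem [IsAlgClosed K] [CharZero K] {I : Ideal (DiffPolynomial K)}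
    (hI : I ≠ ⊤) (hshift : ∀ P ∈ I, shift P ∈ I)
    (hC : ∀ p : K[X], p ≠ 0 → ∀ Q, C p * Q ∈ I → Q ∈ I)
    (hX : ∀ Q, X (OrderDual.toDual 0) * Q ∈ I → Q ∈ I) : I = ⊥ := by
  by_contra hI_ne
  obtain ⟨P, hP, hP_ne, hgen⟩ := exists_mem_forall_degree_le_eq_C_mul jetOrder hI_ne
  obtain ⟨q, hq⟩ := hgen _ (hshift P hP) (degree_shift_le P)
  have hdeg : jetOrder.degree P ≠ 0 := by
    intro hdeg
    have hP_C := jetOrder.eq_C_of_degree_eq_zero hdeg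
    refine hI ((Ideal.eq_top_iff_one I).2 (hC _ (jetOrder.leadingCoeff_ne_zero_iff.2 hP_ne) 1 ?_))
    rwa [mul_one, ← hP_C]
  have hq_deg : q.degree ≠ 0 := by
    intro h
    apply hdeg
    rw [← Finsupp.degree_eq_zero_iff, ← natDegree_eq_of_shift_eq hP_ne hq]
    exact Polynomial.natDegree_eq_of_degree_eq_some h
  obtain ⟨c, hc⟩ := IsAlgClosed.exists_root q hq_deg
  rcases eq_or_ne c 0 with rfl | hc_ne
  · obtain ⟨Q, rfl⟩ := X_zero_dvd_of_shift_eq hq hc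
    exact X_prime.not_isUnit
      (isUnit_of_forall_degree_le_eq_C_mul jetOrder hP_ne hgen (hX Q hP))
  · obtain ⟨Q, rfl⟩ := C_X_sub_C_dvd_of_shift_eq hq hc_ne hc
    exact ((prime_C_iff _).2 (Polynomial.prime_X_sub_C _)).not_isUnit
      (isUnit_of_forall_degree_le_eq_C_mul jetOrder hP_ne hgen
        (hC _ (Polynomial.X_sub_C_ne_zero _) Q hP))

end Shift

section Sequences

variable {K : Type*}

/-- The ideal of differential polynomials that vanish at `x = k` and the jet `y k` for all large
natural numbers `k`. -/
def eventuallyVanishingIdeal [CommSemiring K] (y : ℕ → ℕ → K) : Ideal (DiffPolynomial K) where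
  carrier := {P | ∀ᶠ k : ℕ in atTop, evalAt (k : K) (y k) P = 0}
  zero_mem' := .of_forall fun _ => map_zero _
  add_mem' := by
    intro P Q hP hQ
    filter_upwards [hP, hQ] with k hPk hQk
    rw [map_add, hPk, hQk, add_zero]
  smul_mem' := by
    intro R P hP
    filter_upwards [hP] with k hPk
    rw [smul_eq_mul, map_mul, hPk, mul_zero]

theorem mem_eventuallyVanishingIdeal [CommSemiring K] {y : ℕ → ℕ → K} {P : DiffPolynomial K} :
    P ∈ eventuallyVanishingIdeal y ↔ ∀ᶠ k : ℕ in atTop, evalAt (k : K) (y k) P = 0 :=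
  Iff.rfl

theorem mem_eventuallyVanishingIdeal_of_mul_mem [CommSemiring K] [NoZeroDivisors K]
    {y : ℕ → ℕ → K} {P Q : DiffPolynomial K}
    (hP : ∀ᶠ k : ℕ in atTop, evalAt (k : K) (y k) P ≠ 0)
    (hPQ : P * Q ∈ eventuallyVanishingIdeal y) : Q ∈ eventuallyVanishingIdeal y := by
  rw [mem_eventuallyVanishingIdeal] at hPQ ⊢
  filter_upwards [hP, hPQ] with k hPk hPQk
  rw [map_mul] at hPQk
  exact (mul_eq_zero.1 hPQk).resolve_left hPk

theorem eventually_eval_natCast_ne_zero [CommRing K] [IsDomain K] [CharZero K] {p : K[X]}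
    (hp : p ≠ 0) : ∀ᶠ k : ℕ in atTop, p.eval (k : K) ≠ 0 := by
  rw [← Nat.cofinite_eq_atTop]
  exact Nat.cast_injective.tendsto_cofinite.eventually
    (Polynomial.eventually_cofinite_not_isRoot hp)

theorem shift_mem_eventuallyVanishingIdeal [CommSemiring K] {y : ℕ → ℕ → K}
    (hy : ∀ᶠ k : ℕ in atTop, y (k + 1) = shiftJet (k : K) (y k)) {P : DiffPolynomial K}
    (hP : P ∈ eventuallyVanishingIdeal y) : shift P ∈ eventuallyVanishingIdeal y := by
  have hP_succ := (tendsto_add_atTop_nat 1).eventually (mem_eventuallyVanishingIdeal.1 hP)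
  rw [mem_eventuallyVanishingIdeal]
  filter_upwards [hP_succ, hy] with k hPk hyk
  rwa [evalAt_shift, ← hyk, ← Nat.cast_succ]

theorem eventuallyVanishingIdeal_eq_bot [Field K] [IsAlgClosed K] [CharZero K]
    {y : ℕ → ℕ → K}
    (hy : ∀ᶠ k : ℕ in atTop, y (k + 1) = shiftJet (k : K) (y k))
    (hy_ne : ∀ᶠ k : ℕ in atTop, y k 0 ≠ 0) : eventuallyVanishingIdeal y = ⊥ := by
  refine ideal_eq_bot_of_shift_mem ?_ (fun P => shift_mem_eventuallyVanishingIdeal hy) ?_ ?_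
  · rw [Ideal.ne_top_iff_one, mem_eventuallyVanishingIdeal]
    intro h
    obtain ⟨k, hk⟩ := h.exists
    exact one_ne_zero ((map_one _).symm.trans hk)
  · intro p hp Q
    refine mem_eventuallyVanishingIdeal_of_mul_mem ?_
    simpa only [evalAt_C] using eventually_eval_natCast_ne_zero hp
  · intro Q
    refine mem_eventuallyVanishingIdeal_of_mul_mem ?_
    simpa only [evalAt_X, OrderDual.ofDual_toDual] using hy_ne

end Sequences

section FiniteOrder

variable {K : Type*} [CommSemiring K]

/-- The embedding of polynomials in `x, Y₀, …, Yₙ`, with `x` as the variable of index `0`, into the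
ring of differential polynomials. -/
noncomputable def toDiffPolynomial (n : ℕ) : MvPolynomial (Fin (n + 2)) K →+* DiffPolynomial K :=
  (rename fun i : Fin (n + 1) => OrderDual.toDual (i : ℕ)).toRingHom.comp <|
    (optionEquivRight K (Fin (n + 1))).toRingEquiv.toRingHom.comp <|
      (rename (_root_.finSuccEquiv (n + 1))).toRingHom

theorem toDiffPolynomial_injective (n : ℕ) :
    Function.Injective (toDiffPolynomial n : MvPolynomial (Fin (n + 2)) K →+* DiffPolynomial K) :=
  (rename_injective _ (OrderDual.toDual.injective.comp Fin.val_injective)).comp <|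
    (optionEquivRight K (Fin (n + 1))).injective.comp <|
      rename_injective _ (_root_.finSuccEquiv (n + 1)).injective

theorem evalAt_toDiffPolynomial {n : ℕ} (x : K) (y : ℕ → K) (P : MvPolynomial (Fin (n + 2)) K) :
    evalAt x y (toDiffPolynomial n P) =
      eval (Fin.cases x fun i : Fin (n + 1) => y i) P := by
  have : (evalAt x y).comp (toDiffPolynomial n) =
      eval (Fin.cases x fun i : Fin (n + 1) => y i) := by
    apply MvPolynomial.ringHom_ext
    · simp [toDiffPolynomial]
    · refine Fin.cases ?_ fun i => ?_
      · simp [toDiffPolynomial]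
      · simp [toDiffPolynomial]
  exact RingHom.congr_fun this P

end FiniteOrder

section Gamma

theorem iteratedDeriv_id_mul {𝕜 : Type*} [NontriviallyNormedField 𝕜] {f : 𝕜 → 𝕜} {n : ℕ} {x : 𝕜}
    (hf : ContDiffAt 𝕜 n f x) :
    iteratedDeriv n (fun z => z * f z) x = shiftJet x (fun i => iteratedDeriv i f x) n := by
  rw [iteratedDeriv_fun_mul contDiffAt_fun_id hf]
  simp only [iteratedDeriv_fun_id]
  rcases n with _ | n
  · simp
  · rw [Finset.sum_range_succ', Finset.sum_range_succ']
    simp [shiftJet, add_comm]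

theorem analyticAt_Gamma {z : ℂ} (hz : 0 < z.re) : AnalyticAt ℂ Complex.Gamma z := by
  have hdiff : DifferentiableOn ℂ Complex.Gamma {w | 0 < w.re} := by
    refine fun w hw => (Complex.differentiableAt_Gamma w ?_).differentiableWithinAt
    rintro k rfl
    have hre : (-(k : ℂ)).re ≤ 0 := by simp
    exact hw.not_ge hre
  exact hdiff.analyticAt ((isOpen_lt continuous_const Complex.continuous_re).mem_nhds hz)

theorem iteratedDeriv_Gamma_add_one {z : ℂ} (hz : 0 < z.re) (n : ℕ) :
    iteratedDeriv n Complex.Gamma (z + 1) =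
      shiftJet z (fun i => iteratedDeriv i Complex.Gamma z) n := by
  have hfun : (fun w => Complex.Gamma (w + 1)) =ᶠ[nhds z] fun w => w * Complex.Gamma w := by
    filter_upwards [(isOpen_lt continuous_const Complex.continuous_re).mem_nhds hz] with w hw
    exact Complex.Gamma_add_one w (Complex.ne_zero_of_re_pos hw)
  rw [← iteratedDeriv_id_mul (analyticAt_Gamma hz).contDiffAt, ← hfun.iteratedDeriv_eq,
    iteratedDeriv_comp_add_const]

end Gamma

end GammaTranscendence

open GammaTranscendence in
theorem gamma_differentially_transcendental_general (n : ℕ) (P : MvPolynomial (Fin (n + 2)) ℂ)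
    (hP : ∀ᶠ k : ℕ in Filter.atTop,
      MvPolynomial.eval (Fin.cases (k : ℂ)
        (fun i : Fin (n + 1) => iteratedDeriv (i : ℕ) Complex.Gamma k)) P = 0) :
    P = 0 := by
  let y : ℕ → ℕ → ℂ := fun k i => iteratedDeriv i Complex.Gamma k
  have hy : ∀ᶠ k : ℕ in Filter.atTop, y (k + 1) = shiftJet (k : ℂ) (y k) := by
    filter_upwards [Filter.eventually_gt_atTop 0] with k hk
    funext i
    simpa [y] using iteratedDeriv_Gamma_add_one (z := k) (by simpa using hk) i
  have hy_ne : ∀ᶠ k : ℕ in Filter.atTop, y k 0 ≠ 0 := by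
    filter_upwards [Filter.eventually_gt_atTop 0] with k hk
    simpa [y] using Complex.Gamma_ne_zero_of_re_pos (s := k) (by simpa using hk)
  have hmem : toDiffPolynomial n P ∈ eventuallyVanishingIdeal y := by
    simpa only [mem_eventuallyVanishingIdeal, evalAt_toDiffPolynomial] using hP
  rw [eventuallyVanishingIdeal_eq_bot hy hy_ne, Ideal.mem_bot] at hmem
  exact (map_eq_zero_iff _ (toDiffPolynomial_injective n)).1 hmem

/-- Hölder's theorem: the Euler Gamma function is differentially transcendental over `ℂ(x)`:
any polynomial relation `P(x, Γ(x), Γ'(x), …, Γ⁽ⁿ⁾(x)) = 0` valid on the right half-plane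
forces `P = 0`. -/
theorem gamma_differentially_transcendental
    (n : ℕ) (P : MvPolynomial (Fin (n + 2)) ℂ)
    (hP : ∀ x : ℂ, 0 < x.re →
      MvPolynomial.eval
        (Fin.cases x (fun i : Fin (n + 1) => iteratedDeriv (i : ℕ) Complex.Gamma x)) P = 0) :
    P = 0 :=
  gamma_differentially_transcendental_general n P <|
    (Filter.eventually_gt_atTop 0).mono fun k hk => hP k (by simpa using hk)
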